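/- arXiv:1011.0667 — 2 statements merged into one kernel-verified Lean document; each statement's English description precedes it below -/
import Mathlib

section
/- If H is a homogeneous polynomial of degree 2j on ℝⁿ with Δ^j H = 0, then the integral of H over any ball B(0,t), t > 0, centered at the origin vanishes. -/
open MeasureTheory

/-- The Laplacian acting on polynomials in `n` variables. -/
noncomputable def polyLaplacian (n : ℕ) (Q : MvPolynomial (Fin n) ℝ) :
    MvPolynomial (Fin n) ℝ :=
  ∑ i : Fin n, MvPolynomial.pderiv i (MvPolynomial.pderiv i Q)

open MvPolynomial in
lemma aux_eval_smul {n d : ℕ} {H : MvPolynomial (Fin n) ℝ} (hH : H.IsHomogeneous d)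
    (r : ℝ) (x : Fin n → ℝ) : eval (fun i => r * x i) H = r ^ d * eval x H := by
  rw [eval_eq', eval_eq', Finset.mul_sum]
  refine Finset.sum_congr rfl fun m hm => ?_
  have h := hH (mem_support_iff.mp hm)
  rw [Finsupp.weight_apply, Finsupp.sum_fintype _ _ (by simp)] at h
  simp only [mul_pow, Finset.prod_mul_distrib, Finset.prod_pow_eq_pow_sum]
  simp at h
  rw [h]; ring

lemma aux_polar {E : Type*} [NormedAddCommGroup E] [NormedSpace ℝ E] [FiniteDimensional ℝ E]
    [MeasurableSpace E] [BorelSpace E] [Nontrivial E] (μ : Measure E) [μ.IsAddHaarMeasure]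
    (d : ℕ) (P : E → ℝ) (hP : ∀ (r : ℝ) (x : E), 0 < r → P (r • x) = r ^ d * P x) (f : ℝ → ℝ) :
    ∫ x, P x * f ‖x‖ ∂μ = (∫ s : Metric.sphere (0 : E) 1, P s ∂μ.toSphere) *
      ∫ r : Set.Ioi (0 : ℝ), r.1 ^ d * f r ∂(Measure.volumeIoiPow (Module.finrank ℝ E - 1)) := by
  calc
    ∫ x, P x * f ‖x‖ ∂μ = ∫ x : ({(0)}ᶜ : Set E), P x.1 * f (‖x.1‖) ∂(μ.comap (↑)) := by
      rw [integral_subtype_comap (measurableSet_singleton _).compl fun x ↦ P x * f (‖x‖),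
        restrict_compl_singleton]
    _ = ∫ x, P x.1 * (x.2.1 ^ d * f x.2) ∂μ.toSphere.prod
          (.volumeIoiPow (Module.finrank ℝ E - 1)) := by
      rw [← μ.measurePreserving_homeomorphUnitSphereProd.integral_comp
        (Homeomorph.measurableEmbedding _)]
      refine integral_congr_ae (.of_forall fun x => ?_)
      have hx : 0 < ‖x.1‖ := norm_pos_iff.2 x.2
      simp only [homeomorphUnitSphereProd_apply_snd_coe, homeomorphUnitSphereProd_apply_fst_coe]
      have := hP ‖x.1‖ (‖x.1‖⁻¹ • x.1) hx
      rw [smul_smul, mul_inv_cancel₀ hx.ne', one_smul] at this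
      rw [this]; ring
    _ = _ := integral_prod_mul (fun s : Metric.sphere (0 : E) 1 => P s)
        (fun r : Set.Ioi (0 : ℝ) => r.1 ^ d * f r)

lemma aux_norm_integrable {n : ℕ} (hn : 0 < n) (d : ℕ) :
    Integrable (fun x : EuclideanSpace ℝ (Fin n) => ‖x‖ ^ d * Real.exp (-‖x‖ ^ 2)) := by
  have : Nonempty (Fin n) := ⟨⟨0, hn⟩⟩
  rw [integrable_fun_norm_addHaar volume (f := fun r => r ^ d * Real.exp (- r ^ 2))]
  refine (integrableOn_rpow_mul_exp_neg_mul_sq one_pos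
    (s := ((n - 1 + d : ℕ) : ℝ)) ?_).congr_fun (fun x hx => ?_) measurableSet_Ioi
  · exact lt_of_lt_of_le (by norm_num) (Nat.cast_nonneg _)
  · simp only [Real.rpow_natCast, finrank_euclideanSpace, Fintype.card_fin, smul_eq_mul, pow_add]
    rw [neg_one_mul]; ring

open MvPolynomial in
lemma aux_continuous {n : ℕ} (Q : MvPolynomial (Fin n) ℝ) :
    Continuous (fun y : EuclideanSpace ℝ (Fin n) => eval (fun i => y i) Q) := by
  have := MvPolynomial.continuous_eval Q
  exact this.comp (by fun_prop)

open MvPolynomial in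
lemma aux_integrable {n : ℕ} (hn : 0 < n) (Q : MvPolynomial (Fin n) ℝ) :
    Integrable (fun y : EuclideanSpace ℝ (Fin n) =>
      eval (fun i => y i) Q * Real.exp (-‖y‖ ^ 2)) := by
  have key : ∀ m : Fin n →₀ ℕ, Integrable (fun y : EuclideanSpace ℝ (Fin n) =>
      (∏ i, y i ^ m i) * Real.exp (-‖y‖ ^ 2)) := by
    intro m
    refine (aux_norm_integrable hn (∑ i, m i)).mono' ?_ (.of_forall fun y => ?_)
    · exact Continuous.aestronglyMeasurable (by fun_prop)
    · rw [norm_mul, Real.norm_of_nonneg (Real.exp_pos _).le, ← Finset.prod_pow_eq_pow_sum,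
        norm_prod]
      gcongr with i
      rw [norm_pow]
      gcongr
      exact PiLp.norm_apply_le y i
  simp only [eval_eq', Finset.sum_mul, mul_assoc]
  exact integrable_finsetSum _ fun m _ => (key m).const_mul _

open MvPolynomial in
lemma aux_deriv {n : ℕ} (Q : MvPolynomial (Fin n) ℝ) (i : Fin n)
    (x : EuclideanSpace ℝ (Fin n)) :
    HasLineDerivAt ℝ (fun y : EuclideanSpace ℝ (Fin n) => eval (fun i => y i) Q)
      (eval (fun i => x i) (pderiv i Q)) x (EuclideanSpace.single i 1) := by
  unfold HasLineDerivAt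
  induction Q using MvPolynomial.induction_on with
  | C a => simpa using hasDerivAt_const (0 : ℝ) a
  | add p q hp hq => simpa [Pi.add_def] using hp.add hq
  | mul_X p k hp =>
    have hX : HasDerivAt (fun t : ℝ => (x + t • EuclideanSpace.single i (1 : ℝ)) k)
        (if k = i then 1 else 0) 0 := by
      have := ((hasDerivAt_id (0 : ℝ)).mul_const
        (EuclideanSpace.single i (1 : ℝ) k)).const_add (x k)
      simpa [Pi.single_apply] using this
    have := hp.mul hX
    simp only [Pi.mul_def] at this
    simp only [map_mul, eval_X, Derivation.leibniz, pderiv_X, smul_eq_mul, map_add]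
    refine HasDerivAt.congr_deriv this ?_
    by_cases h : k = i
    · subst h; simp; ring
    · simp [h, Pi.single_apply, Ne.symm h]; ring

lemma aux_gauss_deriv {n : ℕ} (i : Fin n) (x : EuclideanSpace ℝ (Fin n)) :
    HasLineDerivAt ℝ (fun y : EuclideanSpace ℝ (Fin n) => Real.exp (-‖y‖ ^ 2))
      (-2 * x i * Real.exp (-‖x‖ ^ 2)) x (EuclideanSpace.single i 1) := by
  have h : HasFDerivAt (fun y : EuclideanSpace ℝ (Fin n) => ‖y‖ ^ 2) _ x :=
    (hasStrictFDerivAt_norm_sq x).hasFDerivAt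
  have := (h.neg.exp).hasLineDerivAt (EuclideanSpace.single i 1)
  refine HasDerivAt.congr_deriv this ?_
  have hi : inner ℝ x (EuclideanSpace.single i (1 : ℝ)) = x i := by
    rw [EuclideanSpace.inner_single_right]; simp
  simp [hi]
  ring

open MvPolynomial in
lemma aux_ibp {n : ℕ} (hn : 0 < n) (Q : MvPolynomial (Fin n) ℝ) (i : Fin n) :
    2 * ∫ y : EuclideanSpace ℝ (Fin n), eval (fun i => y i) (X i * Q) * Real.exp (-‖y‖ ^ 2)
     = ∫ y : EuclideanSpace ℝ (Fin n), eval (fun i => y i) (pderiv i Q) * Real.exp (-‖y‖ ^ 2) := by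
  have h := integral_bilinear_hasLineDerivAt_right_eq_neg_left_of_integrable
    (μ := (volume : Measure (EuclideanSpace ℝ (Fin n))))
    (f := fun y : EuclideanSpace ℝ (Fin n) => eval (fun i => y i) Q)
    (f' := fun y => eval (fun i => y i) (pderiv i Q))
    (g := fun y => Real.exp (-‖y‖ ^ 2)) (g' := fun y => -2 * y i * Real.exp (-‖y‖ ^ 2))
    (v := EuclideanSpace.single i 1) (B := ContinuousLinearMap.mul ℝ ℝ)
    (by simpa using aux_integrable hn (pderiv i Q))
    (by
      refine ((aux_integrable hn (X i * Q)).const_mul (-2)).congr (.of_forall fun y => ?_)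
      simp; ring)
    (by simpa using aux_integrable hn Q)
    (fun x _ => aux_deriv Q i x) (fun x _ => aux_gauss_deriv i x)
  simp only [ContinuousLinearMap.mul_apply'] at h
  rw [← neg_eq_iff_eq_neg.mpr h, ← integral_neg, ← integral_const_mul]
  refine integral_congr_ae (.of_forall fun y => ?_)
  simp; ring

open MvPolynomial in
lemma aux_lap {n : ℕ} (hn : 0 < n) (d : ℕ) (Q : MvPolynomial (Fin n) ℝ)
    (hQ : Q.IsHomogeneous d) :
    2 * d * ∫ y : EuclideanSpace ℝ (Fin n), eval (fun i => y i) Q * Real.exp (-‖y‖ ^ 2)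
     = ∫ y : EuclideanSpace ℝ (Fin n),
        eval (fun i => y i) (polyLaplacian n Q) * Real.exp (-‖y‖ ^ 2) := by
  have e := hQ.sum_X_mul_pderiv
  have h1 : ∀ y : EuclideanSpace ℝ (Fin n),
      (d : ℝ) * (eval (fun i => y i) Q * Real.exp (-‖y‖ ^ 2)) =
      ∑ i, eval (fun i => y i) (X i * pderiv i Q) * Real.exp (-‖y‖ ^ 2) := by
    intro y
    rw [← Finset.sum_mul, ← map_sum, e]
    simp [mul_assoc]
  rw [mul_assoc, ← integral_const_mul]
  simp only [h1, polyLaplacian, map_sum, Finset.sum_mul]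
  rw [integral_finsetSum _ fun i _ => aux_integrable hn _,
    integral_finsetSum _ fun i _ => aux_integrable hn _, Finset.mul_sum]
  exact Finset.sum_congr rfl fun i _ => aux_ibp hn _ i

open MvPolynomial in
lemma aux_gauss {n : ℕ} (hn : 0 < n) (j : ℕ) (H : MvPolynomial (Fin n) ℝ)
    (hH : H.IsHomogeneous (2 * j)) (hHj : (polyLaplacian n)^[j] H = 0) :
    ∫ y : EuclideanSpace ℝ (Fin n), eval (fun i => y i) H * Real.exp (-‖y‖ ^ 2) = 0 := by
  induction j generalizing H with
  | zero => simp at hHj; simp [hHj]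
  | succ j ih =>
    have h2 : (polyLaplacian n H).IsHomogeneous (2 * j) := by
      refine IsHomogeneous.sum _ _ _ fun i _ => ?_
      exact hH.pderiv.pderiv
    have h := aux_lap hn _ H hH
    rw [ih _ h2 (by simpa using hHj)] at h
    refine (mul_eq_zero.mp h).resolve_left ?_
    positivity

theorem stmt_3 (n j : ℕ) (hn : 0 < n) (H : MvPolynomial (Fin n) ℝ)
    (hH : H.IsHomogeneous (2 * j)) (hHj : (polyLaplacian n)^[j] H = 0) :
    ∀ t : ℝ, 0 < t →
      ∫ y in Metric.ball (0 : EuclideanSpace ℝ (Fin n)) t,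
        MvPolynomial.eval (fun i => y i) H = 0 := by
  intro t ht
  have : Nonempty (Fin n) := ⟨⟨0, hn⟩⟩
  have hP : ∀ (r : ℝ) (x : EuclideanSpace ℝ (Fin n)), 0 < r →
      MvPolynomial.eval (fun i => (r • x) i) H =
        r ^ (2 * j) * MvPolynomial.eval (fun i => x i) H := by
    intro r x _
    simpa using aux_eval_smul hH r (fun i => x i)
  have hpol := aux_polar (volume : Measure (EuclideanSpace ℝ (Fin n))) (2 * j)
    (fun y => MvPolynomial.eval (fun i => y i) H) hP
  have hg := aux_gauss hn j H hH hHj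
  have hN := aux_polar (volume : Measure (EuclideanSpace ℝ (Fin n))) (2 * j)
    (fun y => ‖y‖ ^ (2 * j)) (fun r x hr => by
      simp only [norm_smul, Real.norm_of_nonneg hr.le, mul_pow]) (fun r => Real.exp (-r ^ 2))
  have hpos : 0 < ∫ y : EuclideanSpace ℝ (Fin n), ‖y‖ ^ (2 * j) * Real.exp (-‖y‖ ^ 2) := by
    obtain ⟨x, hx⟩ := exists_ne (0 : EuclideanSpace ℝ (Fin n))
    have hx' : ‖x‖ ≠ 0 := norm_ne_zero_iff.2 hx
    exact integral_pos_of_integrable_nonneg_nonzero (x := x) (by fun_prop)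
      (aux_norm_integrable hn _) (fun y => by positivity) (by positivity)
  have hS := hpol (fun r => Real.exp (-r ^ 2))
  rw [hg] at hS
  have hS0 := (mul_eq_zero.mp hS.symm).resolve_right (by
    intro h0
    rw [h0, mul_zero] at hN
    exact hpos.ne' hN)
  have hb := hpol (Set.indicator (Set.Iio t) 1)
  rw [hS0, zero_mul] at hb
  rw [← hb, ← integral_indicator measurableSet_ball]
  refine integral_congr_ae (.of_forall fun y => ?_)
  by_cases hy : ‖y‖ < t <;> simp [Set.indicator, hy]
end

section
/- For f in the Schwartz class on ℝⁿ, one has ∫_{ℝⁿ} S₁(f)(x)² dx = c·‖∇f‖₂² for a constant c depending only on n, where S₁(f)(x)² = ∫₀^∞ |f_{B(x,t)} − f(x)|² t^{−3} dt and f_{B(x,t)} denotes the mean of f over the ball B(x,t). -/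
open MeasureTheory
open scoped FourierTransform RealInnerProductSpace SchwartzMap

section gen
set_option linter.unusedSectionVars false
variable {V : Type*} [NormedAddCommGroup V] [InnerProductSpace ℝ V] [FiniteDimensional ℝ V]
  [MeasurableSpace V] [BorelSpace V]

lemma planch (g : V → ℂ) (hc : Continuous g) (hi : Integrable g) (hF : Integrable (𝓕 g)) :
    ∫ ξ, ‖𝓕 g ξ‖ ^ 2 = ∫ x, ‖g x‖ ^ 2 := by
  have h := VectorFourier.integral_sesq_fourierIntegral_eq_neg_flip (innerSL ℂ (E := ℂ))
    (L := innerₗ V) (e := Real.fourierChar) (μ := volume) (ν := volume) Real.continuous_fourierChar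
    continuous_inner hi hF
  have h2 : ∀ x, VectorFourier.fourierIntegral Real.fourierChar volume (-(innerₗ V).flip) (𝓕 g) x
      = g x := by
    intro x
    have := congrFun (hc.fourierInv_fourier_eq hi hF) x
    simpa [FourierTransformInv.fourierInv] using this
  have h3 : ∀ x, VectorFourier.fourierIntegral Real.fourierChar volume (innerₗ V) g x
      = 𝓕 g x := fun x => rfl
  simp only [h2, h3, innerSL_apply_apply, inner_self_eq_norm_sq_to_K] at h
  apply Complex.ofRealLI.injective
  simpa [← LinearIsometry.integral_comp_comm] using h

/-- the multiplier -/
noncomputable def psi (ν : Measure V) (ξ : V) : ℝ := ∫ y, (Real.cos (2 * Real.pi * ⟪y, ξ⟫) - 1) ∂ν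

variable (ν : Measure V) [IsProbabilityMeasure ν]

lemma psi_integrable (ξ : V) : Integrable (fun y => Real.cos (2 * Real.pi * ⟪y, ξ⟫) - 1) ν := by
  apply Integrable.of_bound (C := 2) (by fun_prop)
  refine Filter.Eventually.of_forall fun y => ?_
  rw [Real.norm_eq_abs, abs_le]
  constructor <;> linarith [Real.neg_one_le_cos (2 * Real.pi * ⟪y, ξ⟫), Real.cos_le_one (2 * Real.pi * ⟪y, ξ⟫)]

lemma psi_abs_le (ξ : V) : |psi ν ξ| ≤ 2 := by
  have := norm_integral_le_of_norm_le_const (μ := ν) (C := 2)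
    (f := fun y => Real.cos (2 * Real.pi * ⟪y, ξ⟫) - 1) (Filter.Eventually.of_forall fun y => by
      rw [Real.norm_eq_abs, abs_le]
      constructor <;> linarith [Real.neg_one_le_cos (2 * Real.pi * ⟪y, ξ⟫), Real.cos_le_one (2 * Real.pi * ⟪y, ξ⟫)])
  simpa [psi] using this

lemma psi_abs_le_sq (hν : ∀ᵐ y ∂ν, ‖y‖ ≤ 1) (ξ : V) :
    |psi ν ξ| ≤ 2 * Real.pi ^ 2 * ‖ξ‖ ^ 2 := by
  have := norm_integral_le_of_norm_le_const (μ := ν) (C := 2 * Real.pi ^ 2 * ‖ξ‖ ^ 2)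
    (f := fun y => Real.cos (2 * Real.pi * ⟪y, ξ⟫) - 1) (by
      filter_upwards [hν] with y hy
      have h1 := Real.one_sub_sq_div_two_le_cos (x := 2 * Real.pi * ⟪y, ξ⟫)
      have h2 : ⟪y, ξ⟫ ^ 2 ≤ ‖ξ‖ ^ 2 := by
        rw [sq_le_sq, abs_norm]
        calc _ ≤ ‖y‖ * ‖ξ‖ := abs_real_inner_le_norm y ξ
          _ ≤ 1 * ‖ξ‖ := by gcongr
          _ = _ := one_mul _
      have h3 : Real.pi ^ 2 * ⟪y, ξ⟫ ^ 2 ≤ Real.pi ^ 2 * ‖ξ‖ ^ 2 := by gcongr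
      rw [Real.norm_eq_abs, abs_le]
      constructor
      · nlinarith
      · have := Real.cos_le_one (2 * Real.pi * ⟪y, ξ⟫)
        have : 0 ≤ 2 * Real.pi ^ 2 * ‖ξ‖ ^ 2 := by positivity
        linarith)
  simpa [psi] using this

lemma psi_cont : Continuous (psi ν) := by
  unfold psi
  apply continuous_of_dominated (bound := fun _ => 2)
  · intro x; fun_prop
  · intro ξ
    refine Filter.Eventually.of_forall fun y => ?_
    rw [Real.norm_eq_abs, abs_le]
    constructor <;> linarith [Real.neg_one_le_cos (2 * Real.pi * ⟪y, ξ⟫), Real.cos_le_one (2 * Real.pi * ⟪y, ξ⟫)]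
  · fun_prop
  · refine Filter.Eventually.of_forall fun y => ?_
    fun_prop

lemma psi_exp (hneg : ν.map (fun y => -y) = ν) (ξ : V) :
    ∫ y, ((Real.fourierChar ⟪y, ξ⟫ : ℂ) - 1) ∂ν = (psi ν ξ : ℂ) := by
  have hi : Integrable (fun y => (Real.fourierChar ⟪y, ξ⟫ : ℂ) - 1) ν := by
    apply Integrable.of_bound (C := 2)
    · have := Real.continuous_fourierChar
      fun_prop
    · refine Filter.Eventually.of_forall fun y => ?_
      refine (norm_sub_le _ _).trans ?_
      rw [Circle.norm_coe, norm_one]; norm_num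
  have h1 : ∫ y, ((Real.fourierChar ⟪y, ξ⟫ : ℂ) - 1) ∂ν
      = ∫ y, ((Real.fourierChar ⟪-y, ξ⟫ : ℂ) - 1) ∂ν := by
    conv_lhs => rw [← hneg]
    rw [integral_map (by fun_prop)]
    have := Real.continuous_fourierChar
    fun_prop
  have hi' : Integrable (fun y => (Real.fourierChar ⟪-y, ξ⟫ : ℂ) - 1) ν := by
    apply Integrable.of_bound (C := 2)
    · have := Real.continuous_fourierChar
      fun_prop
    · refine Filter.Eventually.of_forall fun y => ?_
      refine (norm_sub_le _ _).trans ?_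
      rw [Circle.norm_coe, norm_one]; norm_num
  have h2 : ∫ y, ((Real.fourierChar ⟪y, ξ⟫ : ℂ) - 1) ∂ν + ∫ y, ((Real.fourierChar ⟪-y, ξ⟫ : ℂ) - 1) ∂ν
      = 2 * (psi ν ξ : ℂ) := by
    rw [← integral_add hi hi', psi, ← integral_complex_ofReal, ← integral_const_mul]
    congr 1
    ext y
    simp only [Real.fourierChar_apply, inner_neg_left, Complex.ofReal_sub, Complex.ofReal_cos,
      Complex.cos, Complex.ofReal_one]
    push_cast
    ring_nf
  rw [← h1] at h2
  linear_combination h2 / 2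

lemma int_trans (f : 𝓢(V, ℂ)) (t : ℝ) :
    Integrable (fun p : V × V => f (p.1 + t • p.2) - f p.1) (volume.prod ν) := by
  have hc : Continuous f := f.continuous
  apply Integrable.sub
  · rw [integrable_prod_iff' (by fun_prop)]
    constructor
    · exact Filter.Eventually.of_forall fun y => f.integrable.comp_add_right (t • y)
    · simp only
      have : ∀ y, ∫ x, ‖f (x + t • y)‖ = ∫ x, ‖f x‖ := fun y =>
        integral_add_right_eq_self (fun x => ‖f x‖) (t • y)
      simp only [this]
      fun_prop
  · exact f.integrable.comp_fst ν

/-- average difference -/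
noncomputable def gav (f : 𝓢(V, ℂ)) (t : ℝ) (x : V) : ℂ := ∫ y, (f (x + t • y) - f x) ∂ν

lemma gav_int (f : 𝓢(V, ℂ)) (t : ℝ) : Integrable (gav ν f t) := (int_trans ν f t).integral_prod_left

lemma schwartz_bd (f : 𝓢(V, ℂ)) : ∃ C : ℝ, 0 ≤ C ∧ ∀ x, ‖f x‖ ≤ C := by
  refine ⟨‖f.toBoundedContinuousFunction‖, norm_nonneg _, fun x => ?_⟩
  exact f.toBoundedContinuousFunction.norm_coe_le_norm x

lemma gav_cont (f : 𝓢(V, ℂ)) : Continuous (fun p : V × ℝ => gav ν f p.2 p.1) := by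
  have hc : Continuous f := f.continuous
  obtain ⟨C, -, hC⟩ := schwartz_bd f
  unfold gav
  apply continuous_of_dominated (bound := fun _ => C + C)
  · intro p; fun_prop
  · intro p
    exact Filter.Eventually.of_forall fun y => (norm_sub_le _ _).trans (add_le_add (hC _) (hC _))
  · fun_prop
  · exact Filter.Eventually.of_forall fun y => by fun_prop

lemma gav_bd (f : 𝓢(V, ℂ)) : ∃ C : ℝ, 0 ≤ C ∧ ∀ t x, ‖gav ν f t x‖ ≤ C := by
  obtain ⟨C, h0, hC⟩ := schwartz_bd f
  refine ⟨C + C, by positivity, fun t x => ?_⟩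
  have := norm_integral_le_of_norm_le_const (μ := ν) (C := C + C)
    (f := fun y => f (x + t • y) - f x) (Filter.Eventually.of_forall fun y =>
      (norm_sub_le _ _).trans (add_le_add (hC _) (hC _)))
  simpa [gav] using this

lemma gav_fourier (hneg : ν.map (fun y => -y) = ν) (f : 𝓢(V, ℂ)) (t : ℝ) (ξ : V) :
    𝓕 (gav ν f t) ξ = psi ν (t • ξ) * 𝓕 f ξ := by
  have h0 := Real.continuous_fourierChar
  have hI : Integrable (Function.uncurry fun x y => Real.fourierChar (-⟪x, ξ⟫) • (f (x + t • y) - f x)) (volume.prod ν) := by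
    refine (int_trans ν f t).mono ?_ ?_
    · have hc : Continuous f := f.continuous
      simp only [Circle.smul_def, Function.uncurry_def]
      fun_prop
    · exact Filter.Eventually.of_forall fun p => by simp [Function.uncurry_def]
  have h1 : ∀ x, Real.fourierChar (-⟪x, ξ⟫) • gav ν f t x
      = ∫ y, Real.fourierChar (-⟪x, ξ⟫) • (f (x + t • y) - f x) ∂ν := by
    intro x
    simp only [gav, Circle.smul_def]
    rw [integral_smul]
  rw [Real.fourier_eq]
  simp_rw [h1]
  rw [integral_integral_swap hI]
  have h2 : ∀ y, ∫ x, Real.fourierChar (-⟪x, ξ⟫) • (f (x + t • y) - f x)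
      = ((Real.fourierChar ⟪y, t • ξ⟫ : ℂ) - 1) * 𝓕 f ξ := by
    intro y
    have a1 : Integrable (fun x => Real.fourierChar (-⟪x, ξ⟫) • f (x + t • y)) := 
      (Real.fourierIntegral_convergent_iff ξ).2 (f.integrable.comp_add_right (t • y))
    have a2 : Integrable (fun x => Real.fourierChar (-⟪x, ξ⟫) • f x) := 
      (Real.fourierIntegral_convergent_iff ξ).2 f.integrable
    simp_rw [smul_sub]
    rw [integral_sub a1 a2]
    have := congrFun (VectorFourier.fourierIntegral_comp_add_right Real.fourierChar (volume : Measure V) (innerₗ V) f (t • y)) ξ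
    have e1 : ∫ x, Real.fourierChar (-⟪x, ξ⟫) • f (x + t • y) = (Real.fourierChar ⟪t • y, ξ⟫) • 𝓕 (f : V → ℂ) ξ := this
    have e2 : ∫ x, Real.fourierChar (-⟪x, ξ⟫) • f x = 𝓕 (f : V → ℂ) ξ := rfl
    rw [e1, e2, SchwartzMap.fourier_coe, Circle.smul_def, inner_smul_left, inner_smul_right, smul_eq_mul]
    simp [sub_mul]
  simp_rw [h2]
  rw [integral_mul_const, psi_exp ν hneg]

lemma gav_planch (hneg : ν.map (fun y => -y) = ν) (f : 𝓢(V, ℂ)) (t : ℝ) :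
    ∫ x, ‖gav ν f t x‖ ^ 2 = ∫ ξ, psi ν (t • ξ) ^ 2 * ‖𝓕 f ξ‖ ^ 2 := by
  have hc : Continuous (gav ν f t) := (gav_cont ν f).comp (by fun_prop : Continuous fun x : V => (x, t))
  have hp := psi_cont ν
  rw [← planch _ hc (gav_int ν f t)]
  · simp_rw [gav_fourier ν hneg, norm_mul, mul_pow, Complex.norm_real, Real.norm_eq_abs, sq_abs]
  · have : 𝓕 (gav ν f t) = fun ξ => (psi ν (t • ξ) : ℂ) * 𝓕 f ξ := funext (gav_fourier ν hneg f t)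
    rw [this]
    apply Integrable.bdd_mul (c := 2) (𝓕 f).integrable
    · fun_prop
    · exact Filter.Eventually.of_forall fun ξ => by simpa using psi_abs_le ν (t • ξ)

lemma psi_rot (hrot : ∀ A : V ≃ₗᵢ[ℝ] V, ν.map A = ν) (A : V ≃ₗᵢ[ℝ] V) (ξ : V) :
    psi ν (A ξ) = psi ν ξ := by
  unfold psi
  conv_lhs => rw [← hrot A]
  rw [integral_map (by fun_prop) (by fun_prop)]
  simp

lemma psi_norm (hrot : ∀ A : V ≃ₗᵢ[ℝ] V, ν.map A = ν) {v w : V} (h : ‖v‖ = ‖w‖) :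
    psi ν v = psi ν w := by
  rw [← Submodule.reflection_sub h, psi_rot ν hrot]

/-- the radial constant -/
noncomputable def Irad (ξ : V) : ℝ := ∫ t in Set.Ioi (0 : ℝ), psi ν (t • ξ) ^ 2 / t ^ 3

lemma Irad_int (hν : ∀ᵐ y ∂ν, ‖y‖ ≤ 1) (ξ : V) :
    IntegrableOn (fun t : ℝ => psi ν (t • ξ) ^ 2 / t ^ 3) (Set.Ioi 0) := by
  have hp := psi_cont ν
  have hm : Measurable (fun t : ℝ => psi ν (t • ξ) ^ 2 / t ^ 3) := by
    have : Measurable (fun t : ℝ => psi ν (t • ξ)) := (by fun_prop : Continuous fun t : ℝ => psi ν (t • ξ)).measurable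
    fun_prop
  rw [← Set.Ioc_union_Ioi_eq_Ioi zero_le_one]
  apply IntegrableOn.union
  · apply Measure.integrableOn_of_bounded (M := (2 * Real.pi ^ 2 * ‖ξ‖ ^ 2) ^ 2) (by simp) hm.aestronglyMeasurable
    rw [ae_restrict_iff' measurableSet_Ioc]
    refine Filter.Eventually.of_forall fun t ht => ?_
    obtain ⟨h0, h1⟩ := ht
    have hb := psi_abs_le_sq ν hν (t • ξ)
    rw [norm_smul, Real.norm_eq_abs, abs_of_pos h0] at hb
    rw [Real.norm_eq_abs, abs_of_nonneg (by positivity), div_le_iff₀ (by positivity)]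
    rw [← sq_abs]
    calc |psi ν (t • ξ)| ^ 2 ≤ (2 * Real.pi ^ 2 * (t * ‖ξ‖) ^ 2) ^ 2 := by gcongr
      _ = (2 * Real.pi ^ 2 * ‖ξ‖ ^ 2) ^ 2 * t ^ 4 := by ring
      _ ≤ (2 * Real.pi ^ 2 * ‖ξ‖ ^ 2) ^ 2 * t ^ 3 := by
        gcongr ?_ * ?_
        exact pow_le_pow_of_le_one h0.le h1 (by norm_num)
  · have h4 : IntegrableOn (fun t : ℝ => 4 * t ^ (-3 : ℝ)) (Set.Ioi 1) :=
      (integrableOn_Ioi_rpow_of_lt (by norm_num) one_pos).const_mul 4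
    refine Integrable.mono' h4 hm.aestronglyMeasurable ?_
    rw [ae_restrict_iff' measurableSet_Ioi]
    refine Filter.Eventually.of_forall fun t ht => ?_
    have h0 : (0 : ℝ) < t := lt_trans one_pos ht
    have hb := psi_abs_le ν (t • ξ)
    rw [Real.norm_eq_abs, abs_of_nonneg (by positivity), Real.rpow_neg h0.le, ← div_eq_mul_inv]
    norm_cast
    gcongr
    rw [← sq_abs]
    calc |psi ν (t • ξ)| ^ 2 ≤ 2 ^ 2 := by gcongr
      _ = _ := by norm_num

lemma Irad_scale (hrot : ∀ A : V ≃ₗᵢ[ℝ] V, ν.map A = ν) {e : V} (he : ‖e‖ = 1) (ξ : V) :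
    Irad ν ξ = ‖ξ‖ ^ 2 * Irad ν e := by
  by_cases hξ : ξ = 0
  · subst hξ
    simp [Irad, psi]
  have hpos : 0 < ‖ξ‖ := norm_pos_iff.2 hξ
  have h1 : ∀ t : ℝ, psi ν (t • ξ) ^ 2 / t ^ 3
      = ‖ξ‖ ^ 3 * (fun s : ℝ => psi ν (s • e) ^ 2 / s ^ 3) (‖ξ‖ * t) := by
    intro t
    have : psi ν (t • ξ) = psi ν ((‖ξ‖ * t) • e) := by
      apply psi_norm ν hrot
      simp [norm_smul, he, mul_comm]
    simp only [this]
    rw [mul_pow]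
    field_simp
  unfold Irad
  simp_rw [h1]
  rw [integral_const_mul, integral_comp_mul_left_Ioi (fun s : ℝ => psi ν (s • e) ^ 2 / s ^ 3) _ hpos, mul_zero, smul_eq_mul]
  field_simp

lemma Irad_pos (hν : ∀ᵐ y ∂ν, ‖y‖ ≤ 1) (hne : ∀ ξ : V, ξ ≠ 0 → psi ν ξ ≠ 0) {e : V} (he : ‖e‖ = 1) :
    0 < Irad ν e := by
  unfold Irad
  rw [setIntegral_pos_iff_support_of_nonneg_ae _ (Irad_int ν hν e)]
  · have : Set.Ioi (0 : ℝ) ⊆ Function.support (fun t : ℝ => psi ν (t • e) ^ 2 / t ^ 3) := by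
      intro t ht
      have ht' : (0 : ℝ) < t := ht
      have h0 : e ≠ 0 := by rintro rfl; simp at he
      have := hne (t • e) (smul_ne_zero ht'.ne' h0)
      simp only [Function.mem_support]
      positivity
    rw [Set.inter_eq_self_of_subset_right this]
    simp
  · refine (ae_restrict_iff' measurableSet_Ioi).2 (Filter.Eventually.of_forall fun t ht => ?_)
    have ht' : (0 : ℝ) < t := ht
    simp only [Pi.zero_apply]
    positivity

lemma main_swap (hν : ∀ᵐ y ∂ν, ‖y‖ ≤ 1) (hrot : ∀ A : V ≃ₗᵢ[ℝ] V, ν.map A = ν) {e : V}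
    (he : ‖e‖ = 1) (f : 𝓢(V, ℂ)) :
    ∫ x, ∫ t in Set.Ioi (0 : ℝ), ‖gav ν f t x‖ ^ 2 / t ^ 3
      = Irad ν e * ∫ ξ, ‖ξ‖ ^ 2 * ‖𝓕 f ξ‖ ^ 2 := by
  have hneg : ν.map (fun y => -y) = ν := hrot (LinearIsometryEquiv.neg ℝ)
  have hp := psi_cont ν
  have hFc : Continuous (𝓕 f : 𝓢(V, ℂ)) := (𝓕 f).continuous
  -- the frequency side
  have hHm : Measurable (fun p : V × ℝ => psi ν (p.2 • p.1) ^ 2 / p.2 ^ 3 * ‖𝓕 f p.1‖ ^ 2) := by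
    have : Measurable (fun p : V × ℝ => psi ν (p.2 • p.1)) :=
      (by fun_prop : Continuous fun p : V × ℝ => psi ν (p.2 • p.1)).measurable
    have : Measurable (fun p : V × ℝ => ‖𝓕 f p.1‖) :=
      (by fun_prop : Continuous fun p : V × ℝ => ‖𝓕 f p.1‖).measurable
    fun_prop
  have hW : Integrable (fun ξ => ‖ξ‖ ^ 2 * ‖𝓕 f ξ‖ ^ 2) := by
    obtain ⟨C, h0, hC⟩ := schwartz_bd (𝓕 f)
    refine Integrable.mono' (((𝓕 f).integrable_pow_mul volume 2).const_mul C) (by fun_prop)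
      (Filter.Eventually.of_forall fun ξ => ?_)
    rw [Real.norm_eq_abs, abs_of_nonneg (by positivity)]
    have := hC ξ
    calc ‖ξ‖ ^ 2 * ‖𝓕 f ξ‖ ^ 2 = ‖𝓕 f ξ‖ * (‖ξ‖ ^ 2 * ‖𝓕 f ξ‖) := by ring
      _ ≤ _ := by gcongr
  have hHin : ∀ ξ, ∫ t in Set.Ioi (0 : ℝ), psi ν (t • ξ) ^ 2 / t ^ 3 * ‖𝓕 f ξ‖ ^ 2
      = Irad ν e * (‖ξ‖ ^ 2 * ‖𝓕 f ξ‖ ^ 2) := by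
    intro ξ
    rw [integral_mul_const]
    change Irad ν ξ * _ = _
    rw [Irad_scale ν hrot he]; ring
  have hH : Integrable (fun p : V × ℝ => psi ν (p.2 • p.1) ^ 2 / p.2 ^ 3 * ‖𝓕 f p.1‖ ^ 2)
      (volume.prod (volume.restrict (Set.Ioi 0))) := by
    rw [integrable_prod_iff hHm.aestronglyMeasurable]
    refine ⟨Filter.Eventually.of_forall fun ξ => (Irad_int ν hν ξ).mul_const (‖𝓕 f ξ‖ ^ 2), ?_⟩
    have : ∀ ξ, ∫ t in Set.Ioi (0 : ℝ), ‖psi ν (t • ξ) ^ 2 / t ^ 3 * ‖𝓕 f ξ‖ ^ 2‖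
      = Irad ν e * (‖ξ‖ ^ 2 * ‖𝓕 f ξ‖ ^ 2) := by
      intro ξ
      rw [← hHin]
      refine setIntegral_congr_fun measurableSet_Ioi fun t ht => ?_
      have ht' : (0 : ℝ) < t := ht
      rw [Real.norm_eq_abs, abs_of_nonneg (by positivity)]
    simp only [this]
    exact hW.const_mul _
  -- fixed t
  have hfix : ∀ t : ℝ, ∫ x, ‖gav ν f t x‖ ^ 2 / t ^ 3
      = ∫ ξ, psi ν (t • ξ) ^ 2 / t ^ 3 * ‖𝓕 f ξ‖ ^ 2 := by
    intro t
    rw [integral_div, gav_planch ν hneg, ← integral_div]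
    congr 1; ext ξ; ring
  have hgc := gav_cont ν f
  have hGm : Measurable (fun p : V × ℝ => ‖gav ν f p.2 p.1‖ ^ 2 / p.2 ^ 3) := by
    have : Measurable (fun p : V × ℝ => ‖gav ν f p.2 p.1‖) := hgc.norm.measurable
    fun_prop
  have hG : Integrable (fun p : V × ℝ => ‖gav ν f p.2 p.1‖ ^ 2 / p.2 ^ 3)
      (volume.prod (volume.restrict (Set.Ioi 0))) := by
    rw [integrable_prod_iff' hGm.aestronglyMeasurable]
    constructor
    · refine Filter.Eventually.of_forall fun t => ?_
      refine Integrable.div_const (f := fun x => ‖gav ν f t x‖ ^ 2) ?_ (t ^ 3)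
      obtain ⟨C, h0, hC⟩ := gav_bd ν f
      have hc : Continuous (gav ν f t) := hgc.comp (by fun_prop : Continuous fun x : V => (x, t))
      refine Integrable.mono' ((gav_int ν f t).norm.const_mul C) (by fun_prop)
        (Filter.Eventually.of_forall fun x => ?_)
      rw [Real.norm_eq_abs, abs_of_nonneg (by positivity), sq]
      gcongr
      exact hC t x
    · refine (hH.integral_prod_right).congr ?_
      refine (ae_restrict_iff' measurableSet_Ioi).2 (Filter.Eventually.of_forall fun t ht => ?_)
      have ht' : (0 : ℝ) < t := ht
      simp only
      rw [← hfix]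
      congr 1; ext x
      rw [Real.norm_eq_abs, abs_of_nonneg (by positivity)]
  rw [integral_integral_swap (f := fun x t => ‖gav ν f t x‖ ^ 2 / t ^ 3) hG]
  simp_rw [hfix]
  rw [← integral_integral_swap (f := fun ξ t => psi ν (t • ξ) ^ 2 / t ^ 3 * ‖𝓕 f ξ‖ ^ 2) hH]
  simp_rw [hHin]
  rw [integral_const_mul]

open LineDeriv in
lemma grad_planch (f : 𝓢(V, ℝ)) :
    ∫ x, ‖fderiv ℝ f x‖ ^ 2 = 4 * Real.pi ^ 2 *
      ∫ ξ, ‖ξ‖ ^ 2 * ‖𝓕 (f.postcompCLM Complex.ofRealCLM) ξ‖ ^ 2 := by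
  set g : 𝓢(V, ℂ) := f.postcompCLM Complex.ofRealCLM with hg
  let b := stdOrthonormalBasis ℝ V
  have h1 : ∀ x, ‖fderiv ℝ f x‖ ^ 2 = ∑ i, ‖(∂_{b i} g : 𝓢(V, ℂ)) x‖ ^ 2 := by
    intro x
    have : ∀ i, (∂_{b i} g : 𝓢(V, ℂ)) x = ((fderiv ℝ f x (b i) : ℝ) : ℂ) := by
      intro i
      rw [SchwartzMap.lineDerivOp_apply_eq_fderiv]
      have hd : HasFDerivAt g (Complex.ofRealCLM.comp (fderiv ℝ f x)) x :=
        Complex.ofRealCLM.hasFDerivAt.comp x f.differentiableAt.hasFDerivAt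
      rw [hd.fderiv]
      simp
    simp_rw [this, Complex.norm_real]
    rw [← (InnerProductSpace.toDual ℝ V).symm.norm_map, ← b.sum_sq_norm_inner_left]
    simp [InnerProductSpace.toDual_symm_apply]
  have h2 : ∀ i, ∫ x, ‖(∂_{b i} g : 𝓢(V, ℂ)) x‖ ^ 2
      = ∫ ξ, 4 * Real.pi ^ 2 * (⟪ξ, b i⟫ ^ 2 * ‖𝓕 g ξ‖ ^ 2) := by
    intro i
    rw [← SchwartzMap.integral_norm_sq_fourier, SchwartzMap.fourier_lineDerivOp_eq]
    congr 1; ext ξ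
    have : (inner ℝ · (b i)).HasTemperateGrowth := ((innerSL ℝ).flip (b i)).hasTemperateGrowth
    simp [this, SchwartzMap.smulLeftCLM_apply_apply, mul_pow, abs_of_pos Real.pi_pos]
    ring_nf
    simp
  have hsq : ∀ h : 𝓢(V, ℂ), Integrable (fun x => ‖h x‖ ^ 2) := fun h =>
    (memLp_two_iff_integrable_sq_norm (h.memLp 2).1).1 (h.memLp 2)
  have hW : ∀ i, Integrable (fun ξ => ⟪ξ, b i⟫ ^ 2 * ‖𝓕 g ξ‖ ^ 2) := by
    intro i
    have : (inner ℝ · (b i)).HasTemperateGrowth := ((innerSL ℝ).flip (b i)).hasTemperateGrowth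
    have := hsq (SchwartzMap.smulLeftCLM ℂ (inner ℝ · (b i)) (𝓕 g))
    simpa [SchwartzMap.smulLeftCLM_apply_apply, mul_pow, norm_smul, *] using this
  simp_rw [h1]
  rw [integral_finsetSum _ (fun i _ => hsq _)]
  simp_rw [h2, integral_const_mul]
  rw [← Finset.mul_sum, ← integral_finsetSum _ (fun i _ => hW i)]
  congr 2; ext ξ
  rw [← Finset.sum_mul, ← b.sum_sq_norm_inner_left ξ]
  simp

/-- normalized measure on the unit ball -/
noncomputable def nuB (V : Type*) [NormedAddCommGroup V] [InnerProductSpace ℝ V] [FiniteDimensional ℝ V]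
  [MeasurableSpace V] [BorelSpace V] : Measure V :=
  (volume (Metric.ball (0 : V) 1))⁻¹ • volume.restrict (Metric.ball (0 : V) 1)

instance nuB_prob : IsProbabilityMeasure (nuB V) := by
  constructor
  have h0 : volume (Metric.ball (0 : V) 1) ≠ 0 := (Metric.measure_ball_pos _ _ one_pos).ne'
  have h1 : volume (Metric.ball (0 : V) 1) ≠ ⊤ := measure_ball_lt_top.ne
  simp [nuB, ENNReal.inv_mul_cancel h0 h1]

lemma nuB_le : ∀ᵐ y ∂(nuB V), ‖y‖ ≤ 1 := by
  apply Measure.ae_smul_measure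
  refine (ae_restrict_iff' Metric.isOpen_ball.measurableSet).2 (Filter.Eventually.of_forall fun y hy => ?_)
  simpa using (mem_ball_zero_iff.1 hy).le

lemma nuB_rot (A : V ≃ₗᵢ[ℝ] V) : (nuB V).map A = nuB V := by
  unfold nuB
  rw [Measure.map_smul]
  congr 1
  have := (A.measurePreserving.restrict_preimage (Metric.isOpen_ball (x := (0 : V)) (ε := 1)).measurableSet).map_eq
  have h2 : A ⁻¹' (Metric.ball (0 : V) 1) = Metric.ball 0 1 := by ext; simp
  rwa [h2] at this

lemma nuB_avg (f : V → ℝ) (x : V) {t : ℝ} (ht : 0 < t) :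
    ⨍ y in Metric.ball x t, f y = ∫ y, f (x + t • y) ∂(nuB V) := by
  rw [nuB, ← setAverage_eq', setAverage_eq, setAverage_eq]
  rw [Measure.setIntegral_comp_smul_of_pos volume (fun y => f (x + y)) _ ht, smul_unitBall ht.ne',
    Real.norm_eq_abs, abs_of_pos ht]
  have h1 : volume.real (Metric.ball x t) = t ^ Module.finrank ℝ V * volume.real (Metric.ball (0 : V) 1) := by
    rw [Measure.real, Measure.addHaar_ball_of_pos (volume : Measure V) x ht, ENNReal.toReal_mul,
      ENNReal.toReal_ofReal (by positivity), Measure.real]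
  rw [h1]
  have h2 : ∫ y in Metric.ball (0 : V) t, f (x + y) = ∫ y in Metric.ball x t, f y := by
    have := (measurePreserving_add_left (volume : Measure V) x).setIntegral_preimage_emb
      (measurableEmbedding_addLeft x) f (Metric.ball x t)
    rw [← this]
    congr 2
    ext y; simp
  rw [h2, mul_inv, smul_smul, mul_comm]

lemma nuB_psi (ξ : V) (hξ : ξ ≠ 0) : psi (nuB V) ξ ≠ 0 := by
  have h0 : volume (Metric.ball (0 : V) 1) ≠ 0 := (Metric.measure_ball_pos _ _ one_pos).ne'
  have h1 : volume (Metric.ball (0 : V) 1) ≠ ⊤ := measure_ball_lt_top.ne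
  have hpos : 0 < ∫ y in Metric.ball (0 : V) 1, (1 - Real.cos (2 * Real.pi * ⟪y, ξ⟫)) := by
    rw [setIntegral_pos_iff_support_of_nonneg_ae]
    · apply IsOpen.measure_pos
      · apply IsOpen.inter _ Metric.isOpen_ball
        apply Continuous.isOpen_support
        fun_prop
      · have hn : 0 < ‖ξ‖ := norm_pos_iff.2 hξ
        refine ⟨(1 / (4 * (‖ξ‖ + ‖ξ‖ ^ 2))) • ξ, ?_, ?_⟩
        · simp only [Function.mem_support]
          rw [inner_smul_left, real_inner_self_eq_norm_sq]
          intro h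
          have h' : Real.cos (2 * Real.pi * (1 / (4 * (‖ξ‖ + ‖ξ‖ ^ 2)) * ‖ξ‖ ^ 2)) = 1 := by
            simp at h ⊢; linarith
          have hq : 1 / (4 * (‖ξ‖ + ‖ξ‖ ^ 2)) * ‖ξ‖ ^ 2 < 1 := by
            rw [one_div, inv_mul_lt_iff₀ (by positivity)]; nlinarith
          have hq0 : 0 < 1 / (4 * (‖ξ‖ + ‖ξ‖ ^ 2)) * ‖ξ‖ ^ 2 := by positivity
          have := (Real.cos_eq_one_iff_of_lt_of_lt (by nlinarith [Real.pi_pos]) (by nlinarith [Real.pi_pos])).1 h'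
          have : 0 < 2 * Real.pi * (1 / (4 * (‖ξ‖ + ‖ξ‖ ^ 2)) * ‖ξ‖ ^ 2) := by positivity
          linarith
        · rw [mem_ball_zero_iff, norm_smul, Real.norm_eq_abs, abs_of_pos (by positivity), one_div,
            inv_mul_lt_iff₀ (by positivity)]
          nlinarith
    · exact Filter.Eventually.of_forall fun y => by
        simpa using Real.cos_le_one _
    · have : Continuous fun y : V => 1 - Real.cos (2 * Real.pi * ⟪y, ξ⟫) := by fun_prop
      exact (this.continuousOn.integrableOn_compact (isCompact_closedBall (0 : V) 1)).mono_set
        Metric.ball_subset_closedBall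
  unfold psi nuB
  rw [integral_smul_measure]
  have : ∫ y in Metric.ball (0 : V) 1, (Real.cos (2 * Real.pi * ⟪y, ξ⟫) - 1)
      = - ∫ y in Metric.ball (0 : V) 1, (1 - Real.cos (2 * Real.pi * ⟪y, ξ⟫)) := by
    rw [← integral_neg]; congr 1; ext y; ring
  rw [this]
  apply smul_ne_zero
  · simp [ENNReal.toReal_eq_zero_iff, h0, h1]
  · exact neg_ne_zero.2 hpos.ne'

end gen

theorem stmt_9 (n : ℕ) (hn : 0 < n) :
    ∃ c : ℝ, 0 < c ∧ ∀ f : SchwartzMap (EuclideanSpace ℝ (Fin n)) ℝ,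
      ∫ x : EuclideanSpace ℝ (Fin n),
          (∫ t in Set.Ioi (0 : ℝ), ((⨍ y in Metric.ball x t, f y) - f x) ^ 2 / t ^ 3) =
        c * ∫ x : EuclideanSpace ℝ (Fin n), ‖fderiv ℝ f x‖ ^ 2 := by
  let e : EuclideanSpace ℝ (Fin n) := EuclideanSpace.single ⟨0, hn⟩ 1
  have he : ‖e‖ = 1 := by simp [e]
  have hI := Irad_pos (nuB _) nuB_le nuB_psi he
  refine ⟨Irad (nuB _) e / (4 * Real.pi ^ 2), by positivity, fun f => ?_⟩
  rw [grad_planch]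
  have hm := main_swap (nuB _) nuB_le nuB_rot he (f.postcompCLM Complex.ofRealCLM)
  have hL : ∀ x : EuclideanSpace ℝ (Fin n),
      (∫ t in Set.Ioi (0 : ℝ), ((⨍ y in Metric.ball x t, f y) - f x) ^ 2 / t ^ 3)
      = ∫ t in Set.Ioi (0 : ℝ), ‖gav (nuB _) (f.postcompCLM Complex.ofRealCLM) t x‖ ^ 2 / t ^ 3 := by
    intro x
    refine setIntegral_congr_fun measurableSet_Ioi fun t ht => ?_
    have ht' : (0 : ℝ) < t := ht
    have hg : gav (nuB _) (f.postcompCLM Complex.ofRealCLM) t x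
        = (((⨍ y in Metric.ball x t, f y) - f x : ℝ) : ℂ) := by
      have hb : Integrable (fun y => f (x + t • y)) (nuB (EuclideanSpace ℝ (Fin n))) := by
        have hc : Continuous f := f.continuous
        apply Integrable.of_bound (C := ‖f.toBoundedContinuousFunction‖) (by fun_prop)
        exact Filter.Eventually.of_forall fun y => f.toBoundedContinuousFunction.norm_coe_le_norm _
      rw [nuB_avg _ _ ht']
      have : ∫ y, f (x + t • y) ∂(nuB (EuclideanSpace ℝ (Fin n))) - f x
          = ∫ y, (f (x + t • y) - f x) ∂(nuB (EuclideanSpace ℝ (Fin n))) := by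
        rw [integral_sub hb (integrable_const _)]; simp
      rw [this, ← integral_complex_ofReal]
      simp [gav]
    simp only [hg, Complex.norm_real, Real.norm_eq_abs, sq_abs]
  simp_rw [hL]
  rw [hm]
  have := Real.pi_pos
  field_simp
end
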